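/- Let n ≥ 3 be an integer and set d := n − 1. Let 1 ≤ q, r ≤ ∞, put q* := max{2, q} and let q*' := q*/(q*−1) be its Hölder conjugate. Assume 1 ≤ p < q*'(n−1), and assume additionally q < ∞ if n = 3. Then there exists a constant C = C(p, q, r, n) > 0 such that for all slice-Schwartz functions f, g : ℝ^d × (0,∞) → ℂ, the pointwise product fg satisfies ‖f g‖_{L̃^{q*/2}(Ḃ^{(n−1)/p + 2/q* − 2}_{p,r})} ≤ C ‖f‖_{L̃^{q*}(Ḃ^{(n−1)/p + 1/q* − 1}_{p,r})} ‖g‖_{L̃^{q*}(Ḃ^{(n−1)/p + 1/q* − 1}_{p,r})}. (Bilinear estimate in scaling critical Chemin–Lerner spaces.) -/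

import Mathlib

/-!
The estimate follows from a frequency-localised bound for each product `Δ_k f · Δ_l g`, summed
with geometric decay in `|j - k|` and `|j - l|`.

Write `d = n - 1`, `ρ = max 2 q`, `a = 1 - 1/ρ ∈ [1/2, 1]`, `s = d/p - a` and `σ = d/p - 2a`, so
that `s` is the regularity of the factors and `σ` that of the product.

* Fourier inversion and Fubini write `Δ_j (u v)` as an integral over pairs of frequencies `(ξ, η)`
  with the symbol of `Δ_j` evaluated at `ξ + η`. Inserting the partition of unity in `ξ` and `η`
  gives `|Δ_j (u v)| ≤ ∑_{k,l} |Δ_j (Δ_k u Δ_l v)|` pointwise (`enorm_LP_mul_le`), and the term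
  `(j, k, l)` vanishes unless each of `j, k, l` is at most the maximum of the other two plus `3`
  (`LP_mul_eq_zero`).
* Young, Hölder and Bernstein inequalities give, for an auxiliary exponent `p̃ ≥ p` with
  `1/p + 1/p̃ ≤ 1`,
  `‖Δ_j (Δ_k u Δ_l v)‖_p ≲ 2^{d j / p̃ + d l (1/p - 1/p̃)} ‖Δ_k u‖_p ‖Δ_l v‖_p`
  (`eLpNorm_LP_term_le`).
* By symmetry let `l ≤ k`. If `|j - k| ≤ 3` (paraproducts) the choice `p̃ = ∞` produces the decay
  `2^{a (l - k)}`. Otherwise `j < k - 3` and `|k - l| ≤ 3` (high-high interaction), and the choice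
  `1/p̃ = min (1/p) (1 - 1/p)` produces `2^{λ (j - k)}` with `λ = d (1/p + 1/p̃) - 2a`. Here
  `λ = 2s > 0` for `p ≥ 2` by the assumption `p < q*' (n - 1)`, and `λ = d - 2a > 0` for `p ≤ 2`,
  which for `n = 3` is where `q < ∞` enters. Hence, with `δ = min a (λ/2)`, the factor
  `2^{-δ |j - k| - δ |j - l|}` is gained in all cases (`weighted_term`).
* Minkowski and Hölder in time reduce the claim to `c_j ≤ C (h * a)_j (h * b)_j` for sequences, with
  `h_i = 2^{-δ |i|}` summable (`time_bilinear`). Young's inequality on `ℤ` and `ℓ^r ⊆ ℓ^∞` conclude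
  (`ellNorm_bilinear`).

All norms take values in `[0, ∞]`, so no finiteness of the right-hand side has to be assumed.
-/

open MeasureTheory Filter Complex
open scoped ENNReal NNReal RealInnerProductSpace Topology

noncomputable section

abbrev Rd (d : ℕ) := EuclideanSpace ℝ (Fin d)

/-- Fourier transform with the paper's convention `F[f](ξ) = ∫ e^{-i x·ξ} f(x) dx`. -/
def FT {d : ℕ} (f : Rd d → ℂ) (ξ : Rd d) : ℂ :=
  ∫ x : Rd d, Complex.exp (-Complex.I * (↑(⟪x, ξ⟫) : ℂ)) * f x

/-- A Littlewood–Paley family: a Schwartz function `φ₀` whose Fourier transform is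
real, takes values in `[0,1]`, is supported in the annulus `1/2 ≤ |ξ| ≤ 2`, and whose
dyadic dilates sum to `1` away from the origin. -/
structure LPData (d : ℕ) where
  φ : SchwartzMap (Rd d) ℂ
  him : ∀ ξ : Rd d, (FT (⇑φ) ξ).im = 0
  h0 : ∀ ξ : Rd d, 0 ≤ (FT (⇑φ) ξ).re
  h1 : ∀ ξ : Rd d, (FT (⇑φ) ξ).re ≤ 1
  hsupp : ∀ ξ : Rd d, FT (⇑φ) ξ ≠ 0 → (1/2 : ℝ) ≤ ‖ξ‖ ∧ ‖ξ‖ ≤ 2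
  hsum : ∀ ξ : Rd d, ξ ≠ 0 → HasSum (fun j : ℤ => FT (⇑φ) ((2:ℝ) ^ (-j) • ξ)) 1

/-- Littlewood–Paley block `Δ_j f = φ_j * f`, where `φ_j(x) = 2^{dj} φ₀(2^j x)`. -/
def LP {d : ℕ} (P : LPData d) (j : ℤ) (f : Rd d → ℂ) (x : Rd d) : ℂ :=
  ∫ y : Rd d, (((2:ℝ) ^ ((d : ℤ) * j) : ℝ) : ℂ) * P.φ ((2:ℝ) ^ j • y) * f (x - y)

/-- `ℓ^r(ℤ)`-norm of a family of extended nonnegative reals. -/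
def ellNorm (r : ℝ≥0∞) (a : ℤ → ℝ≥0∞) : ℝ≥0∞ :=
  if r = ∞ then ⨆ j, a j else (∑' j, a j ^ r.toReal) ^ (1 / r.toReal)

/-- Homogeneous Besov norm `‖f‖_{Ḃ^s_{p,r}}`. -/
def besov {d : ℕ} (P : LPData d) (s : ℝ) (p r : ℝ≥0∞) (f : Rd d → ℂ) : ℝ≥0∞ :=
  ellNorm r fun j => ENNReal.ofReal ((2:ℝ) ^ (s * (j:ℝ))) * eLpNorm (LP P j f) p volume

/-- Mixed norm `L^q_t(0,∞; L^p_x)`. -/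
def LqLp {d : ℕ} (q p : ℝ≥0∞) (g : ℝ → Rd d → ℂ) : ℝ≥0∞ :=
  if q = ∞ then essSup (fun t => eLpNorm (g t) p volume) (volume.restrict (Set.Ioi (0:ℝ)))
  else (∫⁻ t in Set.Ioi (0:ℝ), (eLpNorm (g t) p volume) ^ q.toReal) ^ (1 / q.toReal)

/-- Chemin–Lerner norm `‖f‖_{L̃^q(Ḃ^s_{p,r})}` on `ℝ^d × (0,∞)`. -/
def CL {d : ℕ} (P : LPData d) (s : ℝ) (q p r : ℝ≥0∞) (f : ℝ → Rd d → ℂ) : ℝ≥0∞ :=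
  ellNorm r fun j => ENNReal.ofReal ((2:ℝ) ^ (s * (j:ℝ))) * LqLp q p fun t => LP P j (f t)

/-- `f : ℝ^d × (0,∞) → ℂ` (curried as `f t x`) is slice-Schwartz: continuous on
`ℝ^d × (0,∞)` and Schwartz in `x` for each fixed `t > 0`. -/
def SliceSchwartz {d : ℕ} (f : ℝ → Rd d → ℂ) : Prop :=
  ContinuousOn (fun z : Rd d × ℝ => f z.2 z.1) (Set.univ ×ˢ Set.Ioi 0) ∧
  ∀ t : ℝ, 0 < t → ∃ g : SchwartzMap (Rd d) ℂ, f t = ⇑g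

/-! ### Inequalities for `L^p` norms of `[0, ∞]`-valued functions -/

/-- Minkowski's inequality for countable sums of `[0, ∞]`-valued functions. -/
lemma eLpNorm_tsum_le' {α ι : Type*} [MeasurableSpace α] [Countable ι] {μ : Measure α}
    {F : ι → α → ℝ≥0∞} (hF : ∀ i, AEMeasurable (F i) μ) {p : ℝ≥0∞} (hp : 1 ≤ p) :
    eLpNorm (fun x => ∑' i, F i x) p μ ≤ ∑' i, eLpNorm (F i) p μ := by
  have hp0 : p ≠ 0 := (zero_lt_one.trans_le hp).ne'
  by_cases hpt : p = ∞
  · subst hpt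
    simp only [eLpNorm_exponent_top, eLpNormEssSup, enorm_eq_self]
    refine essSup_le_of_ae_le _ ?_
    have : ∀ᵐ x ∂μ, ∀ i, F i x ≤ essSup (F i) μ := ae_all_iff.2 fun i => ENNReal.ae_le_essSup _
    filter_upwards [this] with x hx
    exact ENNReal.tsum_le_tsum hx
  · have hpr : 0 < p.toReal := ENNReal.toReal_pos hp0 hpt
    rw [eLpNorm_eq_lintegral_rpow_enorm_toReal hp0 hpt, one_div,
      ENNReal.rpow_inv_le_iff hpr]
    have h1 : ∀ x, ‖∑' i, F i x‖ₑ ^ p.toReal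
        = ⨆ s : Finset ι, (∑ i ∈ s, F i x) ^ p.toReal := by
      intro x
      rw [enorm_eq_self, ENNReal.tsum_eq_iSup_sum]
      exact (ENNReal.orderIsoRpow p.toReal hpr).map_iSup _
    simp_rw [h1]
    rw [lintegral_iSup_directed]
    · refine iSup_le fun s => ?_
      rw [← ENNReal.rpow_inv_le_iff hpr, ← one_div]
      have h2 := eLpNorm_sum_le (μ := μ) (p := p) (s := s) (f := F)
        (fun i _ => (hF i).aestronglyMeasurable) hp
      rw [eLpNorm_eq_lintegral_rpow_enorm_toReal hp0 hpt] at h2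
      simp only [enorm_eq_self, Finset.sum_apply] at h2
      exact h2.trans (ENNReal.sum_le_tsum s)
    · intro s
      exact (Finset.aemeasurable_fun_sum s fun i _ => hF i).pow_const _
    · classical
      intro s t
      refine ⟨s ∪ t, fun x => ?_, fun x => ?_⟩
      · exact ENNReal.rpow_le_rpow (Finset.sum_le_sum_of_subset Finset.subset_union_left) hpr.le
      · exact ENNReal.rpow_le_rpow (Finset.sum_le_sum_of_subset Finset.subset_union_right) hpr.le

/-- Jensen's inequality for the measure with density `h`, without normalising its mass. -/
lemma lintegral_mul_rpow_le {α : Type*} [MeasurableSpace α] {μ : Measure α} {h a : α → ℝ≥0∞}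
    (hh : Measurable h) (ha : Measurable a) {p : ℝ} (hp : 1 ≤ p) :
    (∫⁻ y, h y * a y ∂μ) ^ p ≤ (∫⁻ y, h y ∂μ) ^ (p - 1) * ∫⁻ y, h y * a y ^ p ∂μ := by
  have hp0 : 0 < p := by linarith
  have key := eLpNorm'_le_eLpNorm'_mul_rpow_measure_univ (μ := μ.withDensity h) (f := a)
    zero_lt_one hp ha.aestronglyMeasurable
  simp only [eLpNorm', enorm_eq_self, ENNReal.rpow_one, div_one] at key
  rw [lintegral_withDensity_eq_lintegral_mul _ hh ha,
    lintegral_withDensity_eq_lintegral_mul _ hh (ha.pow_const _), withDensity_apply _ .univ,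
    Measure.restrict_univ] at key
  simp only [Pi.mul_apply] at key
  calc _ ≤ _ := ENNReal.rpow_le_rpow key hp0.le
    _ = _ := by
      rw [ENNReal.mul_rpow_of_nonneg _ _ hp0.le, ← ENNReal.rpow_mul, ← ENNReal.rpow_mul,
        one_div_mul_cancel hp0.ne', ENNReal.rpow_one, mul_comm, sub_mul,
        one_div_mul_cancel hp0.ne', one_mul]

/-- Young's inequality `L^p → L^q` for convolution with a kernel `h` of mass at most `B` and height at
most `B * L`. For `q = ∞` it is Jensen's inequality, for `q = p` Jensen and Tonelli, and the general
case interpolates by `g ^ q = g ^ (q - p) * g ^ p`. -/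
lemma eLpNorm_conv_le {G : Type*} [AddCommGroup G] [MeasurableSpace G] [MeasurableAdd₂ G]
    [MeasurableNeg G] {μ : Measure G} [SFinite μ] [μ.IsAddLeftInvariant] [μ.IsNegInvariant]
    {h a : G → ℝ≥0∞} (hh : Measurable h) (ha : Measurable a) {p q B L : ℝ≥0∞}
    (hp : 1 ≤ p) (hpt : p ≠ ∞) (hpq : p ≤ q)
    (hB : ∫⁻ y, h y ∂μ ≤ B) (hBL : ∀ y, h y ≤ B * L) :
    eLpNorm (fun x => ∫⁻ y, h y * a (x - y) ∂μ) q μ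
      ≤ B * L ^ (1 / p.toReal - 1 / q.toReal) * eLpNorm a p μ := by
  have hp0 : p ≠ 0 := (zero_lt_one.trans_le hp).ne'
  have hP1 : 1 ≤ p.toReal := by
    rw [← ENNReal.toReal_one]; exact (ENNReal.toReal_le_toReal (by simp) hpt).2 hp
  set P := p.toReal with hP
  have hP0 : 0 < P := by linarith
  set N := eLpNorm a p μ with hN
  have hNP : ∫⁻ y, a y ^ P ∂μ = N ^ P := by
    rw [hN, eLpNorm_eq_lintegral_rpow_enorm_toReal hp0 hpt, ← ENNReal.rpow_mul,
      ← hP, one_div_mul_cancel hP0.ne', ENNReal.rpow_one]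
    simp
  set g : G → ℝ≥0∞ := fun x => ∫⁻ y, h y * a (x - y) ∂μ with hg
  have hpair : Measurable fun z : G × G => h z.2 * a (z.1 - z.2) ^ P := by
    have : Measurable fun z : G × G => a (z.1 - z.2) :=
      ha.comp (measurable_fst.sub measurable_snd)
    exact (hh.comp measurable_snd).mul (this.pow_const _)
  have hJ : ∀ x, g x ^ P ≤ B ^ (P - 1) * ∫⁻ y, h y * a (x - y) ^ P ∂μ := by
    intro x
    have hax : Measurable fun y => a (x - y) := ha.comp (measurable_id.const_sub x)
    refine (lintegral_mul_rpow_le hh hax hP1).trans ?_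
    gcongr
  have hBB : B ^ (P - 1) * B = B ^ P := by
    conv_lhs => rw [← ENNReal.rpow_one B, ← ENNReal.rpow_mul, one_mul,
      ← ENNReal.rpow_add_of_nonneg _ _ (by linarith) zero_le_one]
    congr 1; ring
  have hsup : ∀ x, g x ≤ B * L ^ (1 / P) * N := by
    intro x
    rw [← ENNReal.rpow_le_rpow_iff hP0]
    calc g x ^ P ≤ B ^ (P - 1) * ∫⁻ y, h y * a (x - y) ^ P ∂μ := hJ x
      _ ≤ B ^ (P - 1) * ∫⁻ y, (B * L) * a (x - y) ^ P ∂μ := by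
          gcongr with y; exact hBL y
      _ = B ^ (P - 1) * ((B * L) * ∫⁻ y, a y ^ P ∂μ) := by
          have hax : Measurable fun y => a (x - y) := ha.comp (measurable_id.const_sub x)
          rw [lintegral_const_mul _ (hax.pow_const _),
            lintegral_sub_left_eq_self (fun y => a y ^ P) x]
      _ = (B * L ^ (1 / P) * N) ^ P := by
          rw [hNP, ENNReal.mul_rpow_of_nonneg _ _ hP0.le, ENNReal.mul_rpow_of_nonneg _ _ hP0.le,
            ← ENNReal.rpow_mul, one_div_mul_cancel hP0.ne', ENNReal.rpow_one, ← hBB]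
          ring
  have hgP : ∫⁻ x, g x ^ P ∂μ ≤ B ^ P * N ^ P := by
    calc ∫⁻ x, g x ^ P ∂μ ≤ ∫⁻ x, B ^ (P - 1) * ∫⁻ y, h y * a (x - y) ^ P ∂μ ∂μ :=
          lintegral_mono hJ
      _ = B ^ (P - 1) * ∫⁻ x, ∫⁻ y, h y * a (x - y) ^ P ∂μ ∂μ :=
          lintegral_const_mul _ hpair.lintegral_prod_right'
      _ = B ^ (P - 1) * ∫⁻ y, ∫⁻ x, h y * a (x - y) ^ P ∂μ ∂μ := by
          rw [lintegral_lintegral_swap hpair.aemeasurable]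
      _ = B ^ (P - 1) * ∫⁻ y, h y * N ^ P ∂μ := by
          congr 2; ext y
          have hay : Measurable fun x => a (x - y) := ha.comp (measurable_id.sub_const y)
          rw [lintegral_const_mul _ (hay.pow_const _),
            lintegral_sub_right_eq_self (fun x => a x ^ P) y, hNP]
      _ = B ^ (P - 1) * ((∫⁻ y, h y ∂μ) * N ^ P) := by rw [lintegral_mul_const _ hh]
      _ ≤ B ^ (P - 1) * (B * N ^ P) := by gcongr
      _ = _ := by rw [← mul_assoc, hBB]
  by_cases hqt : q = ∞
  · subst hqt
    simp only [eLpNorm_exponent_top, eLpNormEssSup, enorm_eq_self, ENNReal.toReal_top, div_zero,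
      sub_zero]
    exact essSup_le_of_ae_le _ (Eventually.of_forall hsup)
  · have hq0 : q ≠ 0 := (zero_lt_one.trans_le (hp.trans hpq)).ne'
    have hPQ : P ≤ q.toReal := (ENNReal.toReal_le_toReal hpt hqt).2 hpq
    set Q := q.toReal with hQ
    have hQ0 : 0 < Q := hP0.trans_le hPQ
    have hgm : Measurable g := by
      have : Measurable fun z : G × G => h z.2 * a (z.1 - z.2) :=
        (hh.comp measurable_snd).mul (ha.comp (measurable_fst.sub measurable_snd))
      exact this.lintegral_prod_right'
    rw [eLpNorm_eq_lintegral_rpow_enorm_toReal hq0 hqt, one_div,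
      ENNReal.rpow_inv_le_iff hQ0]
    simp only [enorm_eq_self]
    have hs : ∀ X : ℝ≥0∞, X ^ Q = X ^ (Q - P) * X ^ P := fun X => by
      rw [← ENNReal.rpow_add_of_nonneg _ _ (by linarith) hP0.le, sub_add_cancel]
    calc ∫⁻ x, g x ^ Q ∂μ ≤ ∫⁻ x, (B * L ^ (1 / P) * N) ^ (Q - P) * g x ^ P ∂μ := by
          refine lintegral_mono fun x => ?_
          rw [hs (g x)]
          gcongr
          exact hsup x
      _ = (B * L ^ (1 / P) * N) ^ (Q - P) * ∫⁻ x, g x ^ P ∂μ :=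
          lintegral_const_mul _ (hgm.pow_const _)
      _ ≤ (B * L ^ (1 / P) * N) ^ (Q - P) * (B ^ P * N ^ P) := by gcongr
      _ = _ := by
          rw [ENNReal.mul_rpow_of_nonneg _ _ (by linarith), ENNReal.mul_rpow_of_nonneg _ _ (by linarith),
            ENNReal.mul_rpow_of_nonneg _ _ hQ0.le, ENNReal.mul_rpow_of_nonneg _ _ hQ0.le,
            hs B, hs N, ← ENNReal.rpow_mul, ← ENNReal.rpow_mul]
          have : 1 / P * (Q - P) = (1 / P - 1 / Q) * Q := by field_simp
          rw [this, ← hQ]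
          ring_nf

/-- Hölder's inequality `L^ρ · L^ρ ⊆ L^{ρ/2}`. -/
lemma eLpNorm_mul_half_le {α : Type*} [MeasurableSpace α] {μ : Measure α} {A B : α → ℝ≥0∞}
    (hA : AEMeasurable A μ) (hB : AEMeasurable B μ) {ρ : ℝ≥0∞} (hρ : 2 ≤ ρ) :
    eLpNorm (fun t => A t * B t) (ρ / 2) μ ≤ eLpNorm A ρ μ * eLpNorm B ρ μ := by
  by_cases hρt : ρ = ∞
  · subst hρt
    rw [ENNReal.top_div_of_ne_top (by simp)]
    simp only [eLpNorm_exponent_top, eLpNormEssSup, enorm_eq_self]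
    exact ENNReal.essSup_mul_le A B
  · have hρ0 : ρ ≠ 0 := (two_pos.trans_le hρ).ne'
    have h2t : ρ / 2 ≠ ∞ := (ENNReal.div_lt_top hρt (by simp)).ne
    have h20 : ρ / 2 ≠ 0 := by simp [hρ0]
    have hR : 0 < ρ.toReal := ENNReal.toReal_pos hρ0 hρt
    rw [eLpNorm_eq_lintegral_rpow_enorm_toReal h20 h2t, eLpNorm_eq_lintegral_rpow_enorm_toReal hρ0 hρt,
      eLpNorm_eq_lintegral_rpow_enorm_toReal hρ0 hρt]
    simp only [enorm_eq_self, ENNReal.toReal_div, ENNReal.toReal_ofNat]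
    refine ENNReal.lintegral_Lp_mul_le_Lq_mul_Lr (by positivity) (by linarith) ?_ μ hA hB
    field_simp
    norm_num

lemma eLpNorm_mul_top_le {α : Type*} [MeasurableSpace α] {μ : Measure α} {A B : α → ℝ≥0∞}
    {c r : ℝ≥0∞} (hr : r ≠ 0) (hA : Measurable A) (hB : ∀ x, B x ≤ c) :
    eLpNorm (fun t => A t * B t) r μ ≤ eLpNorm A r μ * c := by
  by_cases hrt : r = ∞
  · subst hrt
    simp only [eLpNorm_exponent_top, eLpNormEssSup, enorm_eq_self]
    refine (ENNReal.essSup_mul_le A B).trans ?_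
    gcongr
    exact essSup_le_of_ae_le _ (Eventually.of_forall hB)
  · have hR : 0 < r.toReal := ENNReal.toReal_pos hr hrt
    rw [eLpNorm_eq_lintegral_rpow_enorm_toReal hr hrt, eLpNorm_eq_lintegral_rpow_enorm_toReal hr hrt]
    simp only [enorm_eq_self]
    calc _ ≤ (∫⁻ x, A x ^ r.toReal * c ^ r.toReal ∂μ) ^ (1 / r.toReal) := by
          gcongr with x
          rw [← ENNReal.mul_rpow_of_nonneg _ _ hR.le]
          gcongr
          exact hB x
      _ = _ := by
          rw [lintegral_mul_const _ (hA.pow_const _), ENNReal.mul_rpow_of_nonneg _ _ (by positivity),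
            ← ENNReal.rpow_mul, mul_one_div_cancel hR.ne', ENNReal.rpow_one]

lemma ellNorm_eq (r : ℝ≥0∞) (hr : r ≠ 0) (a : ℤ → ℝ≥0∞) :
    ellNorm r a = eLpNorm a r Measure.count := by
  unfold ellNorm
  split_ifs with h
  · subst h
    rw [eLpNorm_exponent_top, eLpNormEssSup_eq_iSup (by simp)]
    simp
  · rw [eLpNorm_eq_lintegral_rpow_enorm_toReal hr h, lintegral_count]
    simp

lemma LqLp_eq {d : ℕ} (q p : ℝ≥0∞) (hq : q ≠ 0) (g : ℝ → Rd d → ℂ) :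
    LqLp q p g = eLpNorm (fun t => eLpNorm (g t) p volume) q (volume.restrict (Set.Ioi 0)) := by
  unfold LqLp
  split_ifs with h
  · subst h
    simp [eLpNormEssSup]
  · rw [eLpNorm_eq_lintegral_rpow_enorm_toReal hq h]
    simp

/-! ### Symbols and kernels of the Littlewood–Paley blocks -/

/-- The Fourier symbol `φ̂₀(2^{-j} ξ)` of `Δ_j`. -/
def mult {d : ℕ} (P : LPData d) (j : ℤ) (ξ : Rd d) : ℂ := FT (⇑P.φ) ((2:ℝ) ^ (-j) • ξ)

/-- The plane wave `x ↦ e^{i x·θ}` of frequency `θ`. -/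
def wave {d : ℕ} (x θ : Rd d) : ℂ := Complex.exp (Complex.I * (↑(⟪x, θ⟫) : ℂ))

lemma norm_wave {d : ℕ} (x θ : Rd d) : ‖wave x θ‖ = 1 := by
  unfold wave
  rw [mul_comm]
  exact Complex.norm_exp_ofReal_mul_I _

lemma wave_add {d : ℕ} (x θ η : Rd d) : wave x (θ + η) = wave x θ * wave x η := by
  unfold wave
  rw [← Complex.exp_add, inner_add_right]
  push_cast
  ring_nf

lemma continuous_wave {d : ℕ} : Continuous fun z : Rd d × Rd d => wave z.1 z.2 := by
  unfold wave
  fun_prop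

lemma norm_mult {d : ℕ} (P : LPData d) (j : ℤ) (ξ : Rd d) : ‖mult P j ξ‖ = (mult P j ξ).re := by
  have h : mult P j ξ = (((mult P j ξ).re : ℝ) : ℂ) := by
    apply Complex.ext <;> simp [mult, P.him]
  rw [h, Complex.norm_real, Complex.ofReal_re, Real.norm_of_nonneg (show 0 ≤ (mult P j ξ).re from P.h0 _)]

lemma norm_mult_le {d : ℕ} (P : LPData d) (j : ℤ) (ξ : Rd d) : ‖mult P j ξ‖ ≤ 1 := by
  rw [norm_mult]; exact P.h1 _

lemma measurable_mult {d : ℕ} (P : LPData d) (j : ℤ) : Measurable (mult P j) := by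
  have : StronglyMeasurable fun ξ : Rd d => FT (⇑P.φ) ξ := by
    unfold FT
    apply StronglyMeasurable.integral_prod_right
      (f := fun (ξ : Rd d) (x : Rd d) => Complex.exp (-Complex.I * (↑(⟪x, ξ⟫) : ℂ)) * P.φ x)
    apply Continuous.stronglyMeasurable
    unfold Function.uncurry
    fun_prop
  exact this.measurable.comp (measurable_const_smul _)

lemma mult_supp {d : ℕ} (P : LPData d) (j : ℤ) (ξ : Rd d) (h : mult P j ξ ≠ 0) :
    (2:ℝ) ^ (j - 1) ≤ ‖ξ‖ ∧ ‖ξ‖ ≤ (2:ℝ) ^ (j + 1) := by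
  have := P.hsupp _ h
  have h2 : (0:ℝ) < 2 ^ j := by positivity
  rw [norm_smul, Real.norm_of_nonneg (by positivity), zpow_neg, inv_mul_eq_div,
    le_div_iff₀ h2, div_le_iff₀ h2] at this
  rw [zpow_sub_one₀ two_ne_zero, zpow_add_one₀ two_ne_zero]
  constructor <;> linarith [this.1, this.2]

lemma hasSum_mult {d : ℕ} (P : LPData d) (ξ : Rd d) (h : ξ ≠ 0) :
    HasSum (fun j => mult P j ξ) 1 := P.hsum ξ h

lemma tsum_enorm_mult {d : ℕ} (P : LPData d) (ξ : Rd d) (h : ξ ≠ 0) :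
    ∑' j, ‖mult P j ξ‖ₑ = 1 := by
  have h1 : HasSum (fun j => (mult P j ξ).re) 1 := Complex.hasSum_re (hasSum_mult P ξ h)
  simp_rw [← ofReal_norm, norm_mult]
  rw [← ENNReal.ofReal_tsum_of_nonneg (fun j => show 0 ≤ (mult P j ξ).re from P.h0 _) h1.summable, h1.tsum_eq]
  simp

/-- Fattened blocks act as the identity on the spectrum of `Δ_k`. -/
lemma sum_mult_near {d : ℕ} (P : LPData d) (k : ℤ) (ξ : Rd d) (h : mult P k ξ ≠ 0) :
    ∑ i ∈ Finset.Icc (k - 2) (k + 2), mult P i ξ = 1 := by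
  have hk := mult_supp P k ξ h
  have hξ : ξ ≠ 0 := by
    rintro rfl
    have : (0:ℝ) < 2 ^ (k - 1) := by positivity
    rw [norm_zero] at hk
    linarith [hk.1]
  have h1 : HasSum (fun i => mult P i ξ) (∑ i ∈ Finset.Icc (k - 2) (k + 2), mult P i ξ) := by
    refine hasSum_sum_of_ne_finset_zero ?_
    intro i hi
    by_contra hne
    apply hi
    have hi' := mult_supp P i ξ hne
    have a1 := (zpow_le_zpow_iff_right₀ (one_lt_two (α := ℝ))).1 (hk.1.trans hi'.2)
    have a2 := (zpow_le_zpow_iff_right₀ (one_lt_two (α := ℝ))).1 (hi'.1.trans hk.2)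
    rw [Finset.mem_Icc]; omega
  exact h1.unique (hasSum_mult P ξ hξ)

/-- The triangle inequality restricts the dyadic sizes of `ξ + η`, `ξ` and `η`. -/
lemma mult_compat {d : ℕ} (P : LPData d) (j k l : ℤ) (ξ η : Rd d)
    (h : mult P j (ξ + η) * (mult P k ξ * mult P l η) ≠ 0) :
    j ≤ max k l + 3 ∧ k ≤ max j l + 3 ∧ l ≤ max j k + 3 := by
  have hj := mult_supp P j _ (left_ne_zero_of_mul h)
  have hk := mult_supp P k _ (left_ne_zero_of_mul (right_ne_zero_of_mul h))
  have hl := mult_supp P l _ (right_ne_zero_of_mul (right_ne_zero_of_mul h))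
  have key : ∀ (a b c : ℤ) (X Y Z : ℝ), (2:ℝ) ^ (a - 1) ≤ X → Y ≤ (2:ℝ) ^ (b + 1) →
      Z ≤ (2:ℝ) ^ (c + 1) → X ≤ Y + Z → a ≤ max b c + 3 := by
    intro a b c X Y Z h1 h2 h3 h4
    have e1 : (2:ℝ) ^ (b + 1) ≤ 2 ^ (max b c + 1) :=
      zpow_le_zpow_right₀ one_le_two (by omega)
    have e2 : (2:ℝ) ^ (c + 1) ≤ 2 ^ (max b c + 1) :=
      zpow_le_zpow_right₀ one_le_two (by omega)
    have e3 : (2:ℝ) ^ (a - 1) ≤ 2 ^ (max b c + 1 + 1) := by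
      rw [zpow_add_one₀ two_ne_zero (max b c + 1)]; linarith
    have := (zpow_le_zpow_iff_right₀ (one_lt_two (α := ℝ))).1 e3
    omega
  refine ⟨key j k l _ _ _ hj.1 hk.2 hl.2 (norm_add_le _ _), key k j l _ _ _ hk.1 hj.2 hl.2 ?_,
    key l j k _ _ _ hl.1 hj.2 hk.2 ?_⟩
  · calc ‖ξ‖ = ‖(ξ + η) - η‖ := by simp
      _ ≤ _ := norm_sub_le _ _
  · calc ‖η‖ = ‖(ξ + η) - ξ‖ := by simp
      _ ≤ _ := norm_sub_le _ _

/-- The convolution kernel `φ_j` of `Δ_j`. -/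
def lpKer {d : ℕ} (P : LPData d) (j : ℤ) (y : Rd d) : ℂ :=
  (((2:ℝ) ^ ((d : ℤ) * j) : ℝ) : ℂ) * P.φ ((2:ℝ) ^ j • y)

lemma LP_eq {d : ℕ} (P : LPData d) (j : ℤ) (f : Rd d → ℂ) (x : Rd d) :
    LP P j f x = ∫ y, lpKer P j y * f (x - y) := rfl

lemma continuous_ker {d : ℕ} (P : LPData d) (j : ℤ) : Continuous (lpKer P j) := by
  unfold lpKer
  exact continuous_const.mul (P.φ.continuous.comp (continuous_const_smul _))

lemma integrable_ker {d : ℕ} (P : LPData d) (j : ℤ) : Integrable (lpKer P j) :=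
  (P.φ.integrable.comp_smul (by positivity)).const_mul _

lemma integral_ker_smul {d : ℕ} {F : Type*} [NormedAddCommGroup F] [NormedSpace ℝ F]
    (j : ℤ) (f : Rd d → F) :
    ((2:ℝ) ^ ((d : ℤ) * j)) • ∫ y, f ((2:ℝ) ^ j • y) = ∫ y, f y := by
  rw [Measure.integral_comp_smul_of_nonneg _ _ _ (hR := by positivity), smul_smul]
  rw [finrank_euclideanSpace, Fintype.card_fin, ← zpow_natCast, ← zpow_mul, mul_comm j,
    mul_inv_cancel₀ (by positivity), one_smul]

/-- Plane waves are eigenfunctions of `Δ_j`, with eigenvalue the symbol at their frequency. -/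
lemma integral_ker_wave {d : ℕ} (P : LPData d) (j : ℤ) (x θ : Rd d) :
    ∫ y, lpKer P j y * wave (x - y) θ = wave x θ * mult P j θ := by
  have h := integral_ker_smul j (fun y : Rd d =>
    Complex.exp (-Complex.I * (↑(⟪y, (2:ℝ) ^ (-j) • θ⟫) : ℂ)) * P.φ y)
  unfold mult FT
  rw [← h, Complex.real_smul, ← integral_const_mul, ← integral_const_mul]
  congr 1; ext y
  have e : ⟪(2:ℝ) ^ j • y, (2:ℝ) ^ (-j) • θ⟫ = ⟪y, θ⟫ := by
    rw [inner_smul_left, inner_smul_right, zpow_neg]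
    simp only [conj_trivial]
    rw [← mul_assoc, mul_inv_cancel₀ (by positivity), one_mul]
  rw [e]
  unfold lpKer wave
  rw [inner_sub_left]
  push_cast
  rw [mul_sub, sub_eq_add_neg, Complex.exp_add]
  ring_nf

/-- `Δ_j` acts on a superposition of plane waves by multiplication with its symbol. The general
parameter space `Z` covers both a single function and a product of two. -/
lemma LP_rep {d : ℕ} {Z : Type*} [MeasurableSpace Z] (μ : Measure Z) [SFinite μ]
    (P : LPData d) (j : ℤ) {θ : Z → Rd d} (hθ : Measurable θ) {H : Z → ℂ} (hH : Integrable H μ)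
    {U : Rd d → ℂ} (hU : ∀ x, U x = ∫ z, wave x (θ z) * H z ∂μ) (x : Rd d) :
    LP P j U x = ∫ z, wave x (θ z) * (mult P j (θ z) * H z) ∂μ := by
  rw [LP_eq]
  simp_rw [hU, ← integral_const_mul]
  rw [integral_integral_swap]
  · congr 1; ext z
    rw [← mul_assoc, ← integral_ker_wave, ← integral_mul_const]
    congr 1; ext y; ring
  · have h1 : Integrable (fun w : Rd d × Z => lpKer P j w.1 * H w.2) (volume.prod μ) :=
      (integrable_ker P j).mul_prod hH
    have h2 := h1.bdd_mul (c := 1) (f := fun w : Rd d × Z => wave (x - w.1) (θ w.2)) ?_ ?_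
    · refine h2.congr (Eventually.of_forall fun w => ?_)
      simp only [Function.uncurry]; ring
    · have : Measurable fun w : Rd d × Z => ((x - w.1, θ w.2) : Rd d × Rd d) := by fun_prop
      exact (continuous_wave.measurable.comp this).aestronglyMeasurable
    · exact Eventually.of_forall fun w => (norm_wave _ _).le

open FourierTransform in
/-- Fourier inversion. Mathlib's transform uses the character `e^{-2π i x·v}`, so the frequency attached
to `v` is `2π v`. -/
lemma schwartz_rep {d : ℕ} (u : SchwartzMap (Rd d) ℂ) (x : Rd d) :
    u x = ∫ v, wave x ((2 * Real.pi) • v) * (𝓕 u) v := by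
  have h : 𝓕⁻ (𝓕 u) = u := fourierInv_fourier_eq u
  conv_lhs => rw [← h, SchwartzMap.fourierInv_coe, Real.fourierInv_eq']
  congr 1; ext v
  unfold wave
  rw [inner_smul_right, smul_eq_mul, real_inner_comm]
  push_cast
  ring_nf

/-! ### Frequency decomposition of products -/

open FourierTransform in
/-- The Fourier transform in Mathlib's normalisation (character `e^{-2π i x·v}`), as a function. -/
def hat {d : ℕ} (u : SchwartzMap (Rd d) ℂ) : Rd d → ℂ := ⇑(𝓕 u : SchwartzMap (Rd d) ℂ)

lemma integrable_hat {d : ℕ} (u : SchwartzMap (Rd d) ℂ) : Integrable (hat u) :=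
  SchwartzMap.integrable _

lemma integrable_mult_mul {d : ℕ} {Z : Type*} [MeasurableSpace Z] {μ : Measure Z}
    (P : LPData d) (j : ℤ) {θ : Z → Rd d} (hθ : Measurable θ) {H : Z → ℂ} (hH : Integrable H μ) :
    Integrable (fun z => mult P j (θ z) * H z) μ :=
  hH.bdd_mul (c := 1) ((measurable_mult P j).comp hθ).aestronglyMeasurable
    (Eventually.of_forall fun _ => norm_mult_le _ _ _)

lemma integrable_wave_mul {d : ℕ} {Z : Type*} [MeasurableSpace Z] {μ : Measure Z}
    (x : Rd d) {θ : Z → Rd d} (hθ : Measurable θ) {H : Z → ℂ} (hH : Integrable H μ) :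
    Integrable (fun z => wave x (θ z) * H z) μ :=
  hH.bdd_mul (c := 1)
    (continuous_wave.measurable.comp (measurable_const.prodMk hθ)).aestronglyMeasurable
    (Eventually.of_forall fun _ => (norm_wave _ _).le)

/-- The angular frequency `2π v` belonging to Mathlib's frequency variable `v`. -/
def tau {d : ℕ} (v : Rd d) : Rd d := (2 * Real.pi) • v

lemma measurable_tau {d : ℕ} : Measurable (tau (d := d)) := measurable_const_smul _

lemma hat_rep {d : ℕ} (u : SchwartzMap (Rd d) ℂ) (x : Rd d) :
    u x = ∫ v, wave x (tau v) * hat u v := schwartz_rep u x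

lemma LP_hat_rep {d : ℕ} (P : LPData d) (k : ℤ) (u : SchwartzMap (Rd d) ℂ) (x : Rd d) :
    LP P k u x = ∫ v, wave x (tau v) * (mult P k (tau v) * hat u v) :=
  LP_rep volume P k measurable_tau (integrable_hat u) (hat_rep u) x

lemma LP_reproduce {d : ℕ} (P : LPData d) (k : ℤ) (u : SchwartzMap (Rd d) ℂ) (x : Rd d) :
    LP P k u x = ∑ i ∈ Finset.Icc (k - 2) (k + 2), LP P i (LP P k u) x := by
  have hI := integrable_mult_mul P k measurable_tau (integrable_hat u)
  simp_rw [LP_rep volume P _ measurable_tau hI (LP_hat_rep P k u)]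
  rw [← integral_finsetSum _ fun i _ => integrable_wave_mul x measurable_tau
    (integrable_mult_mul P i measurable_tau hI), LP_hat_rep]
  congr 1; ext v
  rw [← Finset.mul_sum, ← Finset.sum_mul]
  by_cases h : mult P k (tau v) = 0
  · simp [h]
  · rw [sum_mult_near P k _ h, one_mul]

/-- The product of two superpositions of plane waves, as a superposition over the product space. -/
lemma mul_rep {d : ℕ} {Z W : Type*} [MeasurableSpace Z] [MeasurableSpace W] {μ : Measure Z}
    {ν : Measure W} [SFinite μ] [SFinite ν] {θ : Z → Rd d} {η : W → Rd d} {H : Z → ℂ} {K : W → ℂ}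
    {U V : Rd d → ℂ} (hU : ∀ x, U x = ∫ z, wave x (θ z) * H z ∂μ)
    (hV : ∀ x, V x = ∫ w, wave x (η w) * K w ∂ν) (x : Rd d) :
    U x * V x = ∫ z : Z × W, wave x (θ z.1 + η z.2) * (H z.1 * K z.2) ∂(μ.prod ν) := by
  rw [hU, hV, ← integral_prod_mul]
  congr 1; ext z
  rw [wave_add]; ring

lemma measurable_tau_add {d : ℕ} : Measurable fun z : Rd d × Rd d => tau z.1 + tau z.2 :=
  (measurable_tau.comp measurable_fst).add (measurable_tau.comp measurable_snd)

lemma LP_mul_rep {d : ℕ} (P : LPData d) (j k l : ℤ) (u v : SchwartzMap (Rd d) ℂ) (x : Rd d) :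
    LP P j (fun y => LP P k u y * LP P l v y) x =
      ∫ z : Rd d × Rd d, wave x (tau z.1 + tau z.2) * (mult P j (tau z.1 + tau z.2) *
        ((mult P k (tau z.1) * hat u z.1) * (mult P l (tau z.2) * hat v z.2)))
        ∂(volume.prod volume) :=
  LP_rep _ P j measurable_tau_add
    ((integrable_mult_mul P k measurable_tau (integrable_hat u)).mul_prod
      (integrable_mult_mul P l measurable_tau (integrable_hat v)))
    (fun y => mul_rep (LP_hat_rep P k u) (LP_hat_rep P l v) y) x

/-- Spectral localisation: incompatible dyadic triples do not interact. -/
lemma LP_mul_eq_zero {d : ℕ} (P : LPData d) (j k l : ℤ) (u v : SchwartzMap (Rd d) ℂ)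
    (h : ¬ (j ≤ max k l + 3 ∧ k ≤ max j l + 3 ∧ l ≤ max j k + 3)) :
    LP P j (fun y => LP P k u y * LP P l v y) = 0 := by
  ext x
  rw [LP_mul_rep]
  refine integral_eq_zero_of_ae (Eventually.of_forall fun z => ?_)
  have h0 : mult P j (tau z.1 + tau z.2) * (mult P k (tau z.1) * mult P l (tau z.2)) = 0 := by
    by_contra hne
    exact h (mult_compat P j k l _ _ hne)
  calc _ = wave x (tau z.1 + tau z.2) *
        (mult P j (tau z.1 + tau z.2) * (mult P k (tau z.1) * mult P l (tau z.2))) *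
        (hat u z.1 * hat v z.2) := by ring
    _ = 0 := by rw [h0]; simp

lemma hasSum_mul_int {f g : ℤ → ℂ} {a b : ℂ} (hf : HasSum f a) (hg : HasSum g b) :
    HasSum (fun kl : ℤ × ℤ => f kl.1 * g kl.2) (a * b) := by
  have h1 : Summable fun k => ‖f k‖ := hf.summable.norm
  have h2 : Summable fun k => ‖g k‖ := hg.summable.norm
  exact hf.mul hg (summable_mul_of_summable_norm h1 h2)

lemma ENNReal.tsum_mul_int (f g : ℤ → ℝ≥0∞) :
    ∑' kl : ℤ × ℤ, f kl.1 * g kl.2 = (∑' k, f k) * ∑' l, g l := by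
  rw [ENNReal.tsum_prod (f := fun k l => f k * g l)]
  simp_rw [ENNReal.tsum_mul_left]
  rw [ENNReal.tsum_mul_right]

/-- The double frequency decomposition of a product inside `Δ_j`. The partition of unity holds off the
origin, so the origin must be a null set; this is where `d ≥ 1` enters. -/
lemma enorm_LP_mul_le {d : ℕ} [Nontrivial (Rd d)] (P : LPData d) (j : ℤ)
    (u v : SchwartzMap (Rd d) ℂ) (x : Rd d) :
    ‖LP P j (fun y => u y * v y) x‖ₑ ≤
      ∑' kl : ℤ × ℤ, ‖LP P j (fun y => LP P kl.1 u y * LP P kl.2 v y) x‖ₑ := by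
  rw [LP_rep _ P j measurable_tau_add ((integrable_hat u).mul_prod (integrable_hat v))
    (fun y => mul_rep (hat_rep u) (hat_rep v) y)]
  simp_rw [LP_mul_rep]
  set F : ℤ × ℤ → Rd d × Rd d → ℂ := fun kl z =>
    wave x (tau z.1 + tau z.2) * (mult P j (tau z.1 + tau z.2) *
        ((mult P kl.1 (tau z.1) * hat u z.1) * (mult P kl.2 (tau z.2) * hat v z.2))) with hF
  have hae : ∀ᵐ z : Rd d × Rd d ∂(volume.prod volume), tau z.1 ≠ 0 ∧ tau z.2 ≠ 0 := by
    have h0 : ∀ᵐ z : Rd d, tau z ≠ 0 := by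
      have : ∀ᵐ z : Rd d, z ≠ 0 := by simp [ae_iff]
      filter_upwards [this] with z hz
      simp [tau, hz, Real.pi_ne_zero]
    exact (Measure.quasiMeasurePreserving_fst.ae h0).and (Measure.quasiMeasurePreserving_snd.ae h0)
  have hFi : ∀ kl, Integrable (F kl) (volume.prod volume) := fun kl =>
    integrable_wave_mul x measurable_tau_add (integrable_mult_mul P j measurable_tau_add
      ((integrable_mult_mul P kl.1 measurable_tau (integrable_hat u)).mul_prod
      (integrable_mult_mul P kl.2 measurable_tau (integrable_hat v))))
  have hsum : ∀ᵐ z : Rd d × Rd d ∂(volume.prod volume),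
      wave x (tau z.1 + tau z.2) * (mult P j (tau z.1 + tau z.2) * (hat u z.1 * hat v z.2))
        = ∑' kl, F kl z := by
    filter_upwards [hae] with z hz
    have a1 := hasSum_mult P _ hz.1
    have a2 := hasSum_mult P _ hz.2
    have a3 := hasSum_mul_int a1 a2
    have a4 := a3.mul_left (wave x (tau z.1 + tau z.2) *
      (mult P j (tau z.1 + tau z.2) * (hat u z.1 * hat v z.2)))
    rw [mul_one, mul_one] at a4
    rw [← a4.tsum_eq]
    congr 1; ext kl
    simp only [hF]; ring
  clear_value F
  have hFm : ∀ kl, AEMeasurable (fun z => ‖F kl z‖ₑ) (volume.prod volume) := fun kl =>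
    (hFi kl).aestronglyMeasurable.enorm
  have hfin' : ∑' kl, ∫⁻ z, ‖F kl z‖ₑ ∂(volume.prod volume) ≠ ∞ := by
    rw [← lintegral_tsum hFm]
    have hfin := ((integrable_hat u).mul_prod (integrable_hat v)).2
    refine (lt_of_le_of_lt (lintegral_mono_ae ?_) hfin).ne
    filter_upwards [hae] with z hz
    have b : ∀ kl, ‖F kl z‖ₑ ≤ ‖mult P kl.1 (tau z.1)‖ₑ * ‖mult P kl.2 (tau z.2)‖ₑ *
        ‖hat u z.1 * hat v z.2‖ₑ := by
      intro kl
      have c1 : ‖wave x (tau z.1 + tau z.2)‖ₑ = 1 := by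
        rw [← ofReal_norm, norm_wave]; simp
      have c2 : ‖mult P j (tau z.1 + tau z.2)‖ₑ ≤ 1 := by
        rw [← ofReal_norm]; exact ENNReal.ofReal_le_one.2 (norm_mult_le P j _)
      simp only [hF, enorm_mul, c1, one_mul]
      calc _ ≤ 1 * _ := mul_le_mul_left c2 _
        _ = _ := by ring
    refine (ENNReal.tsum_le_tsum b).trans ?_
    rw [ENNReal.tsum_mul_right, ENNReal.tsum_mul_int (fun k => ‖mult P k (tau z.1)‖ₑ)
      (fun l => ‖mult P l (tau z.2)‖ₑ), tsum_enorm_mult P _ hz.1, tsum_enorm_mult P _ hz.2]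
    simp
  have htsum := integral_tsum (fun kl => (hFi kl).aestronglyMeasurable) hfin'
  rw [integral_congr_ae hsum, htsum]
  refine enorm_tsum_le_tsum_enorm.trans (le_of_eq ?_)
  rw [hF]

/-! ### Bernstein and Hölder estimates for a single term -/

lemma two_rpow_add (x y : ℝ) : (2:ℝ≥0∞) ^ (x + y) = 2 ^ x * 2 ^ y :=
  ENNReal.rpow_add x y two_ne_zero ENNReal.ofNat_ne_top

lemma two_rpow_mono {x y : ℝ} (h : x ≤ y) : (2:ℝ≥0∞) ^ x ≤ 2 ^ y :=
  ENNReal.rpow_le_rpow_of_exponent_le one_le_two h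

lemma two_rpow_ne_top (x : ℝ) : (2:ℝ≥0∞) ^ x ≠ ∞ :=
  ENNReal.rpow_ne_top_of_ne_zero two_ne_zero ENNReal.ofNat_ne_top

lemma ofReal_two_rpow (x : ℝ) : ENNReal.ofReal ((2:ℝ) ^ x) = (2:ℝ≥0∞) ^ x := by
  rw [← ENNReal.ofReal_rpow_of_pos two_pos]; simp

/-- A common bound `B` for the mass of the kernels of all `Δ_j` and for their height after removing
the scaling factor `2^{dj}`. -/
structure KerBound {d : ℕ} (P : LPData d) (B : ℝ≥0∞) : Prop where
  ne_top : B ≠ ∞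
  int : ∀ j, ∫⁻ y, ‖lpKer P j y‖ₑ ≤ B
  sup : ∀ j y, ‖lpKer P j y‖ₑ ≤ B * 2 ^ ((d:ℝ) * j)

lemma exists_kerBound {d : ℕ} (P : LPData d) : ∃ B, KerBound P B := by
  refine ⟨max (ENNReal.ofReal (∫ y, ‖P.φ y‖))
    (ENNReal.ofReal (SchwartzMap.seminorm ℝ 0 0 P.φ)), by simp, fun j => ?_, fun j y => ?_⟩
  · refine le_trans (le_of_eq ?_) (le_max_left _ _)
    rw [← ofReal_integral_norm_eq_lintegral_enorm (integrable_ker P j)]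
    congr 1
    rw [← integral_ker_smul j (fun y => ‖P.φ y‖), smul_eq_mul, ← integral_const_mul]
    congr 1; ext y
    unfold lpKer
    rw [norm_mul, Complex.norm_real, Real.norm_of_nonneg (by positivity)]
  · have h : (2:ℝ≥0∞) ^ ((d:ℝ) * j) = ENNReal.ofReal ((2:ℝ) ^ ((d : ℤ) * j)) := by
      rw [← ofReal_two_rpow, ← Real.rpow_intCast]; push_cast; rfl
    rw [h]
    refine le_trans ?_ (mul_le_mul_left (le_max_right _ _) _)
    rw [← ofReal_norm, ← ENNReal.ofReal_mul (by positivity)]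
    refine ENNReal.ofReal_le_ofReal ?_
    unfold lpKer
    rw [norm_mul, Complex.norm_real, Real.norm_of_nonneg (by positivity), mul_comm]
    gcongr
    exact SchwartzMap.norm_le_seminorm ℝ P.φ _

lemma measurable_LP {d : ℕ} (P : LPData d) (j : ℤ) {U : Rd d → ℂ} (hU : Measurable U) :
    Measurable (LP P j U) := by
  have h : Measurable fun z : Rd d × Rd d => lpKer P j z.2 * U (z.1 - z.2) :=
    ((continuous_ker P j).measurable.comp measurable_snd).mul
      (hU.comp (measurable_fst.sub measurable_snd))
  exact h.stronglyMeasurable.integral_prod_right'.measurable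

lemma eLpNorm_LP_le {d : ℕ} {P : LPData d} {B : ℝ≥0∞} (hB : KerBound P B) (j : ℤ)
    {U : Rd d → ℂ} (hU : Measurable U) {p q : ℝ≥0∞} (hp : 1 ≤ p) (hpt : p ≠ ∞) (hpq : p ≤ q) :
    eLpNorm (LP P j U) q volume
      ≤ B * 2 ^ ((d:ℝ) * j * (1 / p.toReal - 1 / q.toReal)) * eLpNorm U p volume := by
  have h := eLpNorm_conv_le (μ := (volume : Measure (Rd d))) (h := fun y => ‖lpKer P j y‖ₑ)
    (a := fun y => ‖U y‖ₑ) (continuous_ker P j).measurable.enorm hU.enorm hp hpt hpq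
    (hB.int j) (hB.sup j)
  rw [← ENNReal.rpow_mul, eLpNorm_enorm] at h
  refine le_trans (eLpNorm_mono_enorm fun x => ?_) h
  rw [LP_eq, enorm_eq_self]
  refine (enorm_integral_le_lintegral_enorm _).trans (le_of_eq ?_)
  simp_rw [enorm_mul]

lemma inv_toReal_antitone {p q : ℝ≥0∞} (hp : 1 ≤ p) (hpt : p ≠ ∞) (hpq : p ≤ q) :
    0 ≤ 1 / p.toReal - 1 / q.toReal := by
  by_cases hq : q = ∞
  · simp [hq]
  · have h1 : 0 < p.toReal := ENNReal.toReal_pos (zero_lt_one.trans_le hp).ne' hpt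
    have h2 : p.toReal ≤ q.toReal := (ENNReal.toReal_le_toReal hpt hq).2 hpq
    have := one_div_le_one_div_of_le h1 h2
    linarith

/-- Bernstein's inequality: `Δ_l v` is reproduced by five neighbouring blocks, each of which maps
`L^p` to `L^q`. -/
lemma eLpNorm_LP_bernstein {d : ℕ} {P : LPData d} {B : ℝ≥0∞} (hB : KerBound P B) (l : ℤ)
    (v : SchwartzMap (Rd d) ℂ) {p q : ℝ≥0∞} (hp : 1 ≤ p) (hpt : p ≠ ∞) (hpq : p ≤ q) :
    eLpNorm (LP P l v) q volume
      ≤ 5 * (B * 2 ^ ((d:ℝ) * 2 * (1 / p.toReal - 1 / q.toReal))) *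
        2 ^ ((d:ℝ) * l * (1 / p.toReal - 1 / q.toReal)) * eLpNorm (LP P l v) p volume := by
  have hm : Measurable (LP P l v) := measurable_LP P l v.continuous.measurable
  have he := inv_toReal_antitone hp hpt hpq
  set e := 1 / p.toReal - 1 / q.toReal with hE
  have h1 : LP P l v = ∑ i ∈ Finset.Icc (l - 2) (l + 2), LP P i (LP P l v) := by
    ext x; rw [Finset.sum_apply]; exact LP_reproduce P l v x
  calc eLpNorm (LP P l v) q volume
      = eLpNorm (∑ i ∈ Finset.Icc (l - 2) (l + 2), LP P i (LP P l v)) q volume := by rw [← h1]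
    _ ≤ ∑ i ∈ Finset.Icc (l - 2) (l + 2), eLpNorm (LP P i (LP P l v)) q volume :=
        eLpNorm_sum_le (fun i _ => (measurable_LP P i hm).aestronglyMeasurable) (hp.trans hpq)
    _ ≤ ∑ i ∈ Finset.Icc (l - 2) (l + 2),
          B * 2 ^ ((d:ℝ) * 2 * e + (d:ℝ) * l * e) * eLpNorm (LP P l v) p volume := by
        refine Finset.sum_le_sum fun i hi => (eLpNorm_LP_le hB i hm hp hpt hpq).trans ?_
        gcongr
        · exact one_le_two
        · have : (i:ℝ) ≤ l + 2 := by exact_mod_cast (Finset.mem_Icc.1 hi).2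
          have h3 : (d:ℝ) * i * e ≤ d * (l + 2) * e := by gcongr
          linarith
    _ = _ := by
        rw [Finset.sum_const, Int.card_Icc, two_rpow_add]
        have : (l + 2 + 1 - (l - 2)).toNat = 5 := by omega
        rw [this]; simp only [nsmul_eq_mul]; push_cast; ring

lemma eLpNorm_mul_holder_le {d : ℕ} {f g : Rd d → ℂ} (hf : Measurable f) (hg : Measurable g)
    {p pt m : ℝ≥0∞} (hT : ENNReal.HolderTriple p pt m) :
    eLpNorm (fun y => f y * g y) m volume ≤ eLpNorm f p volume * eLpNorm g pt volume := by
  have h := eLpNorm_smul_le_mul_eLpNorm (p := p) (q := pt) (r := m) (μ := volume)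
    hg.aestronglyMeasurable hf.aestronglyMeasurable
  exact h

/-- Hölder into `L^m` with `1/m = 1/p + 1/p̃`, followed by Young for `Δ_j` from `L^m` back to `L^p`. -/
lemma eLpNorm_LP_mul_le {d : ℕ} {P : LPData d} {B : ℝ≥0∞} (hB : KerBound P B)
    {p pt : ℝ≥0∞} (hp : 1 ≤ p) (hpt : p ≠ ∞) (hpp : p ≤ pt) (hm : p⁻¹ + pt⁻¹ ≤ 1) (j : ℤ)
    {f g : Rd d → ℂ} (hf : Measurable f) (hg : Measurable g) :
    eLpNorm (LP P j (fun y => f y * g y)) p volume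
      ≤ B * 2 ^ ((d:ℝ) * j * (1 / pt.toReal)) *
        (eLpNorm f p volume * eLpNorm g pt volume) := by
  have hp0 : p ≠ 0 := (zero_lt_one.trans_le hp).ne'
  have hpt0 : pt ≠ 0 := (zero_lt_one.trans_le (hp.trans hpp)).ne'
  obtain ⟨m, hmdef⟩ : ∃ m : ℝ≥0∞, m = (p⁻¹ + pt⁻¹)⁻¹ := ⟨_, rfl⟩
  have hT : ENNReal.HolderTriple p pt m := ⟨by rw [hmdef, inv_inv]⟩
  have hm1 : 1 ≤ m := by rw [hmdef]; exact ENNReal.one_le_inv.2 hm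
  have hmp : m ≤ p := by
    rw [hmdef, ENNReal.inv_le_iff_inv_le]; exact le_self_add
  have hmt : m ≠ ∞ := ne_top_of_le_ne_top hpt hmp
  have hmr : 1 / m.toReal - 1 / p.toReal = 1 / pt.toReal := by
    rw [one_div m.toReal, ← ENNReal.toReal_inv, hmdef, inv_inv,
      ENNReal.toReal_add (by simp [hp0]) (by simp [hpt0])]
    simp
  have h1 := eLpNorm_LP_le hB j (U := fun y => f y * g y) (hf.mul hg) hm1 hmt hmp
  rw [hmr] at h1
  exact h1.trans (mul_le_mul_right (eLpNorm_mul_holder_le hf hg hT) _)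

lemma eLpNorm_LP_term_le {d : ℕ} (P : LPData d) {p pt : ℝ≥0∞} (hp : 1 ≤ p)
    (hpt : p ≠ ∞) (hpp : p ≤ pt) (hm : p⁻¹ + pt⁻¹ ≤ 1) :
    ∃ C : ℝ≥0∞, C ≠ ∞ ∧ ∀ (u v : SchwartzMap (Rd d) ℂ) (j k l : ℤ),
    eLpNorm (LP P j (fun y => LP P k u y * LP P l v y)) p volume
      ≤ C * 2 ^ ((d:ℝ) * j * (1 / pt.toReal) + (d:ℝ) * l * (1 / p.toReal - 1 / pt.toReal)) *
        (eLpNorm (LP P k u) p volume * eLpNorm (LP P l v) p volume) := by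
  obtain ⟨B, hB⟩ := exists_kerBound P
  refine ⟨B * (5 * (B * 2 ^ ((d:ℝ) * 2 * (1 / p.toReal - 1 / pt.toReal)))), ?_, ?_⟩
  · exact ENNReal.mul_ne_top hB.ne_top (ENNReal.mul_ne_top (by simp)
      (ENNReal.mul_ne_top hB.ne_top (two_rpow_ne_top _)))
  intro u v j k l
  have hku : Measurable (LP P k u) := measurable_LP P k u.continuous.measurable
  have hlv : Measurable (LP P l v) := measurable_LP P l v.continuous.measurable
  have h1 := eLpNorm_LP_mul_le hB hp hpt hpp hm j hku hlv
  have h3 := eLpNorm_LP_bernstein hB l v hp hpt hpp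
  refine h1.trans ((mul_le_mul_right (mul_le_mul_right h3 _) _).trans (le_of_eq ?_))
  rw [two_rpow_add]
  generalize eLpNorm (LP P k u) p volume = X
  generalize eLpNorm (LP P l v) p volume = Y
  ring

/-! ### Decay of the weighted terms -/

/-- Exponent arithmetic in the paraproduct regime `|j - k| ≤ 3`, `l ≤ k`. -/
lemma exponent_near {D ip a δ : ℝ} (hδa : δ ≤ a) (hδ : 0 ≤ δ) {j k l : ℝ}
    (hlk : l ≤ k) (h1 : j ≤ k + 3) (h2 : k - 3 ≤ j) :
    (D * ip - 2 * a) * j + D * l * ip ≤ (3 * |D * ip - 2 * a| + 6 * δ)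
      + -(δ * |j - k|) + -(δ * |j - l|) + (D * ip - a) * k + (D * ip - a) * l := by
  -- the difference of exponents is `σ (j - k) + a (l - k)`
  have hjk : |j - k| ≤ 3 := abs_le.2 ⟨by linarith, by linarith⟩
  have hjl : |j - l| ≤ 3 + (k - l) := abs_le.2 ⟨by linarith, by linarith⟩
  have e1 : (D * ip - 2 * a) * (j - k) ≤ 3 * |D * ip - 2 * a| := by
    have := le_abs_self ((D * ip - 2 * a) * (j - k))
    rw [abs_mul] at this
    nlinarith [abs_nonneg (D * ip - 2 * a)]
  have e2 := mul_le_mul_of_nonneg_left hjk hδ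
  have e3 := mul_le_mul_of_nonneg_left hjl hδ
  have e4 := mul_le_mul_of_nonneg_right hδa (sub_nonneg.2 hlk)
  nlinarith

/-- Exponent arithmetic in the high-high regime `j ≤ k`, `l ≤ k ≤ l + 3`. -/
lemma exponent_far {D ip θ a δ : ℝ} (hδl : 2 * δ ≤ D * (ip + θ) - 2 * a) (hδ : 0 ≤ δ)
    {j k l : ℝ} (hlk : l ≤ k) (h1 : j ≤ k) (h2 : k ≤ l + 3) :
    (D * ip - 2 * a) * j + (D * j * θ + D * l * (ip - θ)) ≤
      (3 * |D * (ip - θ) - (D * ip - a)| + 3 * δ)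
      + -(δ * |j - k|) + -(δ * |j - l|) + (D * ip - a) * k + (D * ip - a) * l := by
  -- the difference of exponents is `λ (j - k) + c (l - k)` with `c = D (ip - θ) - s`
  have hjk : |j - k| ≤ k - j := abs_le.2 ⟨by linarith, by linarith⟩
  have hjl : |j - l| ≤ 3 + (k - j) := abs_le.2 ⟨by linarith, by linarith⟩
  have hl : |l - k| ≤ 3 := abs_le.2 ⟨by linarith, by linarith⟩
  have e1 : (D * (ip - θ) - (D * ip - a)) * (l - k) ≤ 3 * |D * (ip - θ) - (D * ip - a)| := by
    have := le_abs_self ((D * (ip - θ) - (D * ip - a)) * (l - k))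
    rw [abs_mul] at this
    nlinarith [abs_nonneg (D * (ip - θ) - (D * ip - a))]
  have e2 := mul_le_mul_of_nonneg_left hjk hδ
  have e3 := mul_le_mul_of_nonneg_left hjl hδ
  have e4 := mul_le_mul_of_nonneg_right hδl (sub_nonneg.2 h1)
  nlinarith

lemma weight_absorb {C X Y T : ℝ≥0∞} {b σj e c w1 w2 w3 w4 : ℝ}
    (hT : T ≤ C * 2 ^ e * (X * Y)) (h : σj + e ≤ c + w1 + w2 + w3 + w4) (hc : c ≤ b) :
    2 ^ σj * T ≤ (C * 2 ^ b) * (2 ^ w1 * (2 ^ w3 * X)) * (2 ^ w2 * (2 ^ w4 * Y)) := by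
  have h' : σj + e ≤ b + w1 + w2 + w3 + w4 := by linarith
  calc 2 ^ σj * T ≤ 2 ^ σj * (C * 2 ^ e * (X * Y)) := mul_le_mul_right hT _
    _ = C * 2 ^ (σj + e) * (X * Y) := by rw [two_rpow_add]; ring
    _ ≤ C * 2 ^ (b + w1 + w2 + w3 + w4) * (X * Y) := by
        gcongr
        exact one_le_two
    _ = _ := by simp only [two_rpow_add]; ring

/-- The weighted bound for a single term when the frequency of the second factor is the lower one. -/
lemma weighted_term_half {d : ℕ} (P : LPData d) {p pt : ℝ≥0∞} (hp : 1 ≤ p)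
    (hpt : p ≠ ∞) (hpp : p ≤ pt) (hm : p⁻¹ + pt⁻¹ ≤ 1) {a δ : ℝ} (hδ : 0 ≤ δ) (hδa : δ ≤ a)
    (hδl : 2 * δ ≤ d * (1 / p.toReal + 1 / pt.toReal) - 2 * a) :
    ∃ C : ℝ≥0∞, C ≠ ∞ ∧ ∀ (u v : SchwartzMap (Rd d) ℂ) (j k l : ℤ), l ≤ k →
    2 ^ ((d * (1 / p.toReal) - 2 * a) * j) *
      eLpNorm (LP P j (fun y => LP P k u y * LP P l v y)) p volume
      ≤ C * (2 ^ (-(δ * |(j:ℝ) - k|)) *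
          (2 ^ ((d * (1 / p.toReal) - a) * k) * eLpNorm (LP P k u) p volume))
        * (2 ^ (-(δ * |(j:ℝ) - l|)) *
          (2 ^ ((d * (1 / p.toReal) - a) * l) * eLpNorm (LP P l v) p volume)) := by
  obtain ⟨C₁, hC₁, H₁⟩ := eLpNorm_LP_term_le P hp hpt (pt := ∞) le_top
    (by simpa using hp)
  obtain ⟨C₂, hC₂, H₂⟩ := eLpNorm_LP_term_le P hp hpt hpp hm
  set b₁ : ℝ := 3 * |d * (1 / p.toReal) - 2 * a| + 6 * δ with hb₁
  set b₂ : ℝ := 3 * |d * (1 / p.toReal - 1 / pt.toReal) - (d * (1 / p.toReal) - a)| + 3 * δ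
    with hb₂
  refine ⟨max C₁ C₂ * 2 ^ max b₁ b₂,
    ENNReal.mul_ne_top (max_lt hC₁.lt_top hC₂.lt_top).ne (two_rpow_ne_top _), ?_⟩
  intro u v j k l hlk
  by_cases hcomp : j ≤ max k l + 3 ∧ k ≤ max j l + 3 ∧ l ≤ max j k + 3
  · obtain ⟨c1, c2, -⟩ := hcomp
    rw [max_eq_left hlk] at c1
    have hlk' : (l:ℝ) ≤ k := by exact_mod_cast hlk
    have c1' : (j:ℝ) ≤ k + 3 := by exact_mod_cast c1
    rcases le_or_gt (k - 3) j with hj | hj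
    · have hj' : (k:ℝ) - 3 ≤ j := by exact_mod_cast hj
      refine weight_absorb (c := b₁) (e := d * l * (1 / p.toReal)) ?_
        (exponent_near hδa hδ hlk' c1' hj') (le_max_left _ _)
      refine (H₁ u v j k l).trans ?_
      have : (d:ℝ) * j * (1 / (∞:ℝ≥0∞).toReal) + d * l * (1 / p.toReal - 1 / (∞:ℝ≥0∞).toReal)
        = d * l * (1 / p.toReal) := by simp
      rw [this]
      gcongr
      exact le_max_left _ _
    · have hkl : k ≤ l + 3 := by
        rcases le_max_iff.1 (show k - 3 ≤ max j l by omega) with h | h <;> omega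
      have hkl' : (k:ℝ) ≤ l + 3 := by exact_mod_cast hkl
      have hjk' : (j:ℝ) ≤ k := by exact_mod_cast (by omega : j ≤ k)
      refine weight_absorb (c := b₂) ?_
        (exponent_far hδl hδ hlk' hjk' hkl') (le_max_right _ _)
      refine (H₂ u v j k l).trans ?_
      gcongr
      exact le_max_right _ _
  · rw [LP_mul_eq_zero P j k l u v hcomp]
    simp

/-- The weighted bound for a single term; the two factors play symmetric roles. -/
lemma weighted_term {d : ℕ} (P : LPData d) {p pt : ℝ≥0∞} (hp : 1 ≤ p)
    (hpt : p ≠ ∞) (hpp : p ≤ pt) (hm : p⁻¹ + pt⁻¹ ≤ 1) {a δ : ℝ} (hδ : 0 ≤ δ) (hδa : δ ≤ a)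
    (hδl : 2 * δ ≤ d * (1 / p.toReal + 1 / pt.toReal) - 2 * a) :
    ∃ C : ℝ≥0∞, C ≠ ∞ ∧ ∀ (u v : SchwartzMap (Rd d) ℂ) (j k l : ℤ),
    2 ^ ((d * (1 / p.toReal) - 2 * a) * j) *
      eLpNorm (LP P j (fun y => LP P k u y * LP P l v y)) p volume
      ≤ C * (2 ^ (-(δ * |(j:ℝ) - k|)) *
          (2 ^ ((d * (1 / p.toReal) - a) * k) * eLpNorm (LP P k u) p volume))
        * (2 ^ (-(δ * |(j:ℝ) - l|)) *
          (2 ^ ((d * (1 / p.toReal) - a) * l) * eLpNorm (LP P l v) p volume)) := by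
  obtain ⟨C, hC, H⟩ := weighted_term_half P hp hpt hpp hm hδ hδa hδl
  refine ⟨C, hC, fun u v j k l => ?_⟩
  rcases le_total l k with h | h
  · exact H u v j k l h
  · have := H v u j l k h
    rw [mul_right_comm] at this
    simpa only [mul_comm (LP P l v _)] using this

lemma weighted_sum {d : ℕ} [Nontrivial (Rd d)] (P : LPData d) {p pt : ℝ≥0∞} (hp : 1 ≤ p)
    (hpt : p ≠ ∞) (hpp : p ≤ pt) (hm : p⁻¹ + pt⁻¹ ≤ 1) {a δ : ℝ} (hδ : 0 ≤ δ) (hδa : δ ≤ a)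
    (hδl : 2 * δ ≤ d * (1 / p.toReal + 1 / pt.toReal) - 2 * a) :
    ∃ C : ℝ≥0∞, C ≠ ∞ ∧ ∀ (u v : SchwartzMap (Rd d) ℂ) (j : ℤ),
    2 ^ ((d * (1 / p.toReal) - 2 * a) * j) *
      eLpNorm (LP P j (fun y => u y * v y)) p volume
      ≤ ∑' kl : ℤ × ℤ, C * (2 ^ (-(δ * |(j:ℝ) - kl.1|)) *
          (2 ^ ((d * (1 / p.toReal) - a) * kl.1) * eLpNorm (LP P kl.1 u) p volume))
        * (2 ^ (-(δ * |(j:ℝ) - kl.2|)) *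
          (2 ^ ((d * (1 / p.toReal) - a) * kl.2) * eLpNorm (LP P kl.2 v) p volume)) := by
  obtain ⟨C, hC, H⟩ := weighted_term P hp hpt hpp hm hδ hδa hδl
  refine ⟨C, hC, fun u v j => ?_⟩
  have hu (k : ℤ) : Measurable (LP P k u) := measurable_LP P k u.continuous.measurable
  have hv (k : ℤ) : Measurable (LP P k v) := measurable_LP P k v.continuous.measurable
  have h1 : eLpNorm (LP P j (fun y => u y * v y)) p volume
      ≤ ∑' kl : ℤ × ℤ,
        eLpNorm (LP P j (fun y => LP P kl.1 u y * LP P kl.2 v y)) p volume := by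
    calc eLpNorm (LP P j (fun y => u y * v y)) p volume
        ≤ eLpNorm (fun x => ∑' kl : ℤ × ℤ,
            ‖LP P j (fun y => LP P kl.1 u y * LP P kl.2 v y) x‖ₑ) p volume := by
          refine eLpNorm_mono_enorm fun x => ?_
          rw [enorm_eq_self]
          exact enorm_LP_mul_le P j u v x
      _ ≤ ∑' kl : ℤ × ℤ, eLpNorm (fun x =>
            ‖LP P j (fun y => LP P kl.1 u y * LP P kl.2 v y) x‖ₑ) p volume := by
          refine eLpNorm_tsum_le' (fun kl => ?_) hp
          exact (measurable_LP P j ((hu kl.1).mul (hv kl.2))).enorm.aemeasurable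
      _ = _ := by simp only [eLpNorm_enorm]
  refine (mul_le_mul_right h1 _).trans ?_
  rw [← ENNReal.tsum_mul_left]
  exact ENNReal.tsum_le_tsum fun kl => H u v j kl.1 kl.2

/-! ### Summation in time and frequency -/

lemma const_mul_eLpNorm_le {α : Type*} [MeasurableSpace α] {μ : Measure α} {A : α → ℝ≥0∞}
    {c r : ℝ≥0∞} (hr : r ≠ 0) (hA : Measurable A) (hc0 : c ≠ 0) (hct : c ≠ ∞) :
    c * eLpNorm A r μ ≤ eLpNorm (fun t => c * A t) r μ := by
  have h := eLpNorm_mul_top_le (μ := μ) (A := fun t => c * A t) (B := fun _ => c⁻¹) hr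
    (hA.const_mul c) (fun _ => le_rfl)
  have h2 : (fun t => c * A t * c⁻¹) = A := by
    ext t; rw [mul_right_comm, ENNReal.mul_inv_cancel hc0 hct, one_mul]
  rw [h2] at h
  calc c * eLpNorm A r μ ≤ c * (eLpNorm (fun t => c * A t) r μ * c⁻¹) := by gcongr
    _ = _ := by rw [mul_comm, mul_assoc, ENNReal.inv_mul_cancel hc0 hct, mul_one]

lemma eLpNorm_const_mul_le {α : Type*} [MeasurableSpace α] {μ : Measure α} {A : α → ℝ≥0∞}
    {r : ℝ≥0∞} (c : ℝ≥0∞) (hr : r ≠ 0) (hA : Measurable A) :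
    eLpNorm (fun t => c * A t) r μ ≤ c * eLpNorm A r μ := by
  have h := eLpNorm_mul_top_le (μ := μ) (A := A) (B := fun _ => c) hr hA (fun _ => le_rfl)
  simpa only [mul_comm] using h

/-- Young's inequality `ℓ¹ * ℓ^r ⊆ ℓ^r` on `ℤ`, by Minkowski and translation invariance. -/
lemma ellNorm_conv_le {r : ℝ≥0∞} (hr : 1 ≤ r) (h a : ℤ → ℝ≥0∞) :
    eLpNorm (fun j => ∑' k, h (j - k) * a k) r Measure.count
      ≤ (∑' i, h i) * eLpNorm a r Measure.count := by
  have hr0 : r ≠ 0 := (zero_lt_one.trans_le hr).ne'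
  have h1 : (fun j : ℤ => ∑' k, h (j - k) * a k) = fun j => ∑' i, h i * a (j - i) := by
    ext j
    rw [← (Equiv.subLeft j).tsum_eq]
    simp
  rw [h1, ← ENNReal.tsum_mul_right]
  refine (eLpNorm_tsum_le' (fun i => (measurable_of_countable _).aemeasurable) hr).trans
    (ENNReal.tsum_le_tsum fun i => ?_)
  refine (eLpNorm_const_mul_le (h i) hr0 (measurable_of_countable _)).trans (le_of_eq ?_)
  congr 1
  exact eLpNorm_comp_measurePreserving (g := a) (f := fun j => j - i)
    (measurable_of_countable _).aestronglyMeasurable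
    (measurePreserving_sub_right Measure.count i)

lemma le_eLpNorm_count {r : ℝ≥0∞} (hr : r ≠ 0) (a : ℤ → ℝ≥0∞) (j : ℤ) :
    a j ≤ eLpNorm a r Measure.count := by
  rw [← ellNorm_eq r hr]
  unfold ellNorm
  split_ifs with h
  · exact le_iSup a j
  · have hpos : 0 < r.toReal := ENNReal.toReal_pos hr h
    rw [one_div, ENNReal.le_rpow_inv_iff hpos]
    exact ENNReal.le_tsum (f := fun j => a j ^ r.toReal) j

lemma ellNorm_bilinear {r : ℝ≥0∞} (hr : 1 ≤ r) (h a b N : ℤ → ℝ≥0∞) (C : ℝ≥0∞)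
    (hN : ∀ j, N j ≤ C * (∑' k, h (j - k) * a k) * (∑' l, h (j - l) * b l)) :
    eLpNorm N r Measure.count ≤ C * (∑' i, h i) ^ 2 *
      eLpNorm a r Measure.count * eLpNorm b r Measure.count := by
  have hr0 : r ≠ 0 := (zero_lt_one.trans_le hr).ne'
  have hb (j : ℤ) : ∑' l, h (j - l) * b l ≤ (∑' i, h i) * eLpNorm b r Measure.count :=
    (le_eLpNorm_count hr0 (fun j => ∑' l, h (j - l) * b l) j).trans (ellNorm_conv_le hr h b)
  calc eLpNorm N r Measure.count
      ≤ eLpNorm (fun j => C * (∑' k, h (j - k) * a k) * (∑' l, h (j - l) * b l)) r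
          Measure.count := eLpNorm_mono_enorm fun j => by simpa using hN j
    _ ≤ eLpNorm (fun j => C * (∑' k, h (j - k) * a k)) r Measure.count *
          ((∑' i, h i) * eLpNorm b r Measure.count) :=
        eLpNorm_mul_top_le hr0 (measurable_of_countable _) hb
    _ ≤ (C * ((∑' i, h i) * eLpNorm a r Measure.count)) *
          ((∑' i, h i) * eLpNorm b r Measure.count) := by
        gcongr
        refine (eLpNorm_const_mul_le C hr0 (measurable_of_countable _)).trans ?_
        gcongr
        exact ellNorm_conv_le hr h a
    _ = _ := by ring

lemma time_bilinear {α : Type*} [MeasurableSpace α] {ν : Measure α} {ρ : ℝ≥0∞} (hρ : 2 ≤ ρ)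
    {A B : ℤ → α → ℝ≥0∞} {N : α → ℝ≥0∞} (hA : ∀ k, Measurable (A k))
    (hB : ∀ k, Measurable (B k)) (hN : Measurable N) (w C : ℝ≥0∞) (hw0 : w ≠ 0) (hwt : w ≠ ∞)
    (x y : ℤ → ℝ≥0∞)
    (H : ∀ t, w * N t ≤ ∑' kl : ℤ × ℤ,
      C * (x kl.1 * (y kl.1 * A kl.1 t)) * (x kl.2 * (y kl.2 * B kl.2 t))) :
    w * eLpNorm N (ρ / 2) ν ≤ C * (∑' k, x k * (y k * eLpNorm (A k) ρ ν)) *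
      (∑' l, x l * (y l * eLpNorm (B l) ρ ν)) := by
  have hρ1 : 1 ≤ ρ / 2 := by
    rw [ENNReal.le_div_iff_mul_le (by simp) (by simp)]; simpa using hρ
  have hρ0 : ρ / 2 ≠ 0 := (zero_lt_one.trans_le hρ1).ne'
  calc w * eLpNorm N (ρ / 2) ν ≤ eLpNorm (fun t => w * N t) (ρ / 2) ν :=
        const_mul_eLpNorm_le hρ0 hN hw0 hwt
    _ ≤ eLpNorm (fun t => ∑' kl : ℤ × ℤ,
          C * (x kl.1 * (y kl.1 * A kl.1 t)) * (x kl.2 * (y kl.2 * B kl.2 t))) (ρ / 2) ν :=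
        eLpNorm_mono_enorm fun t => by simpa using H t
    _ ≤ ∑' kl : ℤ × ℤ, eLpNorm (fun t =>
          C * (x kl.1 * (y kl.1 * A kl.1 t)) * (x kl.2 * (y kl.2 * B kl.2 t))) (ρ / 2) ν := by
        refine eLpNorm_tsum_le' (fun kl => Measurable.aemeasurable ?_) hρ1
        exact ((((hA _).const_mul _).const_mul _).const_mul _).mul
          (((hB _).const_mul _).const_mul _)
    _ ≤ ∑' kl : ℤ × ℤ, (C * (x kl.1 * (y kl.1 * eLpNorm (A kl.1) ρ ν))) *
          (x kl.2 * (y kl.2 * eLpNorm (B kl.2) ρ ν)) := by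
        refine ENNReal.tsum_le_tsum fun kl => ?_
        have e : (fun t => C * (x kl.1 * (y kl.1 * A kl.1 t)) * (x kl.2 * (y kl.2 * B kl.2 t)))
          = fun t => (C * x kl.1 * y kl.1 * x kl.2 * y kl.2) * (A kl.1 t * B kl.2 t) := by
          ext t; ring
        rw [e]
        refine (eLpNorm_const_mul_le _ hρ0 ((hA _).mul (hB _))).trans ?_
        refine (mul_le_mul_right (eLpNorm_mul_half_le (hA _).aemeasurable
          (hB _).aemeasurable hρ) _).trans (le_of_eq ?_)
        ring
    _ = _ := by
        rw [ENNReal.tsum_mul_int (fun k => C * (x k * (y k * eLpNorm (A k) ρ ν)))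
          (fun l => x l * (y l * eLpNorm (B l) ρ ν)), ENNReal.tsum_mul_left]

lemma tsum_two_rpow_ne_top {δ : ℝ} (hδ : 0 < δ) :
    ∑' i : ℤ, (2:ℝ≥0∞) ^ (-(δ * |(i:ℝ)|)) ≠ ∞ := by
  have hc : (2:ℝ≥0∞) ^ (-δ) < 1 := ENNReal.rpow_lt_one_of_one_lt_of_neg (by norm_num) (by linarith)
  have hg : ∑' n : ℕ, ((2:ℝ≥0∞) ^ (-δ)) ^ n ≠ ∞ := by
    rw [ENNReal.tsum_geometric]
    exact ENNReal.inv_ne_top.2 (tsub_pos_of_lt hc).ne'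
  have key (n : ℕ) : (2:ℝ≥0∞) ^ (-(δ * (n:ℝ))) = ((2:ℝ≥0∞) ^ (-δ)) ^ n := by
    rw [← ENNReal.rpow_natCast, ← ENNReal.rpow_mul]; congr 1; ring
  have e := tsum_of_nat_of_neg_add_one (f := fun i : ℤ => (2:ℝ≥0∞) ^ (-(δ * |(i:ℝ)|)))
    ENNReal.summable ENNReal.summable
  rw [e]
  refine ENNReal.add_ne_top.2 ⟨?_, ne_top_of_le_ne_top hg (ENNReal.tsum_le_tsum fun n => ?_)⟩
  · simpa [key] using hg
  · rw [← key]
    refine two_rpow_mono ?_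
    push_cast
    have : (n:ℝ) ≤ |-((n:ℝ) + 1)| := by
      rw [abs_neg, abs_of_nonneg (by positivity)]; linarith
    nlinarith

lemma measurable_eLpNorm_LP {d : ℕ} (P : LPData d) (j : ℤ) {f : ℝ → Rd d → ℂ}
    (hf : Measurable (Function.uncurry f)) {p : ℝ≥0∞} (hp : 1 ≤ p) (hpt : p ≠ ∞) :
    Measurable fun t => eLpNorm (LP P j (f t)) p volume := by
  have h : Measurable fun z : (ℝ × Rd d) × Rd d => lpKer P j z.2 * f z.1.1 (z.1.2 - z.2) :=
    ((continuous_ker P j).measurable.comp measurable_snd).mul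
      (hf.comp (measurable_fst.fst.prodMk (measurable_fst.snd.sub measurable_snd)))
  have h2 : Measurable fun z : ℝ × Rd d => LP P j (f z.1) z.2 :=
    h.stronglyMeasurable.integral_prod_right'.measurable
  have hp0 : p ≠ 0 := (zero_lt_one.trans_le hp).ne'
  simp only [eLpNorm_eq_lintegral_rpow_enorm_toReal hp0 hpt]
  exact ((h2.enorm.pow_const _).lintegral_prod_right').pow_const _

lemma CL_congr {d : ℕ} (P : LPData d) (s : ℝ) (q p r : ℝ≥0∞) (hq : q ≠ 0)
    {f g : ℝ → Rd d → ℂ} (h : ∀ t, 0 < t → f t = g t) : CL P s q p r f = CL P s q p r g := by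
  unfold CL
  congr 1; ext j; congr 1
  rw [LqLp_eq q p hq, LqLp_eq q p hq]
  refine eLpNorm_congr_ae ?_
  filter_upwards [ae_restrict_mem measurableSet_Ioi] with t ht
  rw [h t ht]

/-- Extension by zero to `t ≤ 0` makes a slice-Schwartz function jointly measurable and Schwartz at
every time. -/
lemma SliceSchwartz.measurable_rep {d : ℕ} {f : ℝ → Rd d → ℂ} (hf : SliceSchwartz f) :
    ∃ F : ℝ → SchwartzMap (Rd d) ℂ, (∀ t, 0 < t → f t = F t) ∧
      Measurable (Function.uncurry fun t => (F t : Rd d → ℂ)) := by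
  obtain ⟨hc, hS⟩ := hf
  choose G hG using hS
  refine ⟨fun t => if h : 0 < t then G t h else 0, fun t ht => by simp [ht, hG t ht], ?_⟩
  have hs : MeasurableSet ((Set.univ : Set (Rd d)) ×ˢ Set.Ioi (0:ℝ)) :=
    MeasurableSet.univ.prod measurableSet_Ioi
  have hm : Measurable (((Set.univ : Set (Rd d)) ×ˢ Set.Ioi (0:ℝ)).indicator
      (fun z : Rd d × ℝ => f z.2 z.1)) := by
    classical
    have := hc.measurable_piecewise (g := fun _ => (0:ℂ)) continuousOn_const hs
    exact (Set.piecewise_eq_indicator (s := (Set.univ : Set (Rd d)) ×ˢ Set.Ioi (0:ℝ))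
      (f := fun z : Rd d × ℝ => f z.2 z.1)) ▸ this
  convert hm.comp measurable_swap using 1
  ext ⟨t, x⟩
  by_cases ht : 0 < t
  · simp [Function.uncurry, Set.indicator, ht, hG t ht]
  · simp [Function.uncurry, Set.indicator, ht]

/-- The bilinear estimate with the auxiliary Hölder exponent `pt` and the positivity conditions on the
exponents as hypotheses. -/
theorem CL_bilinear {d : ℕ} [Nontrivial (Rd d)] (P : LPData d) {p pt ρ r : ℝ≥0∞} (hp : 1 ≤ p)
    (hpt : p ≠ ∞) (hpp : p ≤ pt) (hm : p⁻¹ + pt⁻¹ ≤ 1) (hρ : 2 ≤ ρ) (hr : 1 ≤ r) {a : ℝ}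
    (ha : 0 < a) (hl : 0 < d * (1 / p.toReal + 1 / pt.toReal) - 2 * a) :
    ∃ C : ℝ≥0∞, C ≠ ∞ ∧ ∀ f g : ℝ → Rd d → ℂ, SliceSchwartz f → SliceSchwartz g →
      CL P (d * (1 / p.toReal) - 2 * a) (ρ / 2) p r (fun t x => f t x * g t x)
        ≤ C * CL P (d * (1 / p.toReal) - a) ρ p r f * CL P (d * (1 / p.toReal) - a) ρ p r g := by
  -- half of `λ`, because the decay `2^{λ (j - k)}` is shared between `|j - k|` and `|j - l|`
  set δ : ℝ := min a ((d * (1 / p.toReal + 1 / pt.toReal) - 2 * a) / 2) with hδdef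
  have hδ : 0 < δ := lt_min ha (half_pos hl)
  have hδa : δ ≤ a := min_le_left _ _
  have hδl : 2 * δ ≤ d * (1 / p.toReal + 1 / pt.toReal) - 2 * a := by
    have : δ ≤ _ := min_le_right _ _
    linarith
  have hρ0 : ρ ≠ 0 := (two_pos.trans_le hρ).ne'
  have hρ20 : ρ / 2 ≠ 0 := by simp [ENNReal.div_eq_zero_iff, hρ0]
  have hr0 : r ≠ 0 := (zero_lt_one.trans_le hr).ne'
  obtain ⟨C, hC, H⟩ := weighted_sum P hp hpt hpp hm hδ.le hδa hδl
  refine ⟨C * (∑' i : ℤ, (2:ℝ≥0∞) ^ (-(δ * |(i:ℝ)|))) ^ 2,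
    ENNReal.mul_ne_top hC (ENNReal.pow_ne_top (tsum_two_rpow_ne_top hδ)), ?_⟩
  intro f g hf hg
  obtain ⟨F, hfF, hF⟩ := hf.measurable_rep
  obtain ⟨G, hgG, hG⟩ := hg.measurable_rep
  rw [CL_congr P _ ρ p r hρ0 hfF, CL_congr P _ ρ p r hρ0 hgG,
    CL_congr P _ (ρ / 2) p r hρ20 (g := fun t x => F t x * G t x)
      (fun t ht => by rw [hfF t ht, hgG t ht])]
  unfold CL
  simp only [ellNorm_eq r hr0, LqLp_eq _ p hρ0, LqLp_eq _ p hρ20, ofReal_two_rpow]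
  refine ellNorm_bilinear hr (fun i => (2:ℝ≥0∞) ^ (-(δ * |(i:ℝ)|))) _ _ _ C fun j => ?_
  push_cast
  exact time_bilinear hρ (fun k => measurable_eLpNorm_LP P k hF hp hpt)
    (fun k => measurable_eLpNorm_LP P k hG hp hpt)
    (measurable_eLpNorm_LP P j (f := fun t x => F t x * G t x) (hF.mul hG) hp hpt) _ C
    (by simp) (two_rpow_ne_top _) (fun k => (2:ℝ≥0∞) ^ (-(δ * |(j:ℝ) - k|)))
    (fun k => (2:ℝ≥0∞) ^ ((d * (1 / p.toReal) - a) * k)) fun t => H (F t) (G t) j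

/-! ### Exponents -/

/-- The loss of regularity `a = 1 - 1/ρ`, which is the reciprocal of the conjugate exponent, and the
form `a < d/p` of the upper bound on `p`. -/
lemma exponent_facts (n : ℕ) {p ρ qs' : ℝ≥0∞} (hp : 1 ≤ p) (hρ : 2 ≤ ρ)
    (hconj : 1 / ρ + 1 / qs' = 1) (hp2 : p < qs' * ((n - 1 : ℕ) : ℝ≥0∞)) :
    ∃ a : ℝ, a = 1 - (1 / ρ).toReal ∧ 1 / 2 ≤ a ∧ a ≤ 1 ∧
      a < ((n - 1 : ℕ) : ℝ) * (1 / p.toReal) ∧ p ≠ ∞ := by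
  have hρ1 : 1 / ρ ≠ ∞ := ne_top_of_le_ne_top ENNReal.one_ne_top (le_self_add.trans_eq hconj)
  have hq1 : 1 / qs' ≠ ∞ := ne_top_of_le_ne_top ENNReal.one_ne_top (le_add_self.trans_eq hconj)
  have hq0 : qs' ≠ 0 := by rintro rfl; simp at hq1
  have hpt : p ≠ ∞ := (hp2.trans_le le_top).ne
  have hρ2 : (1 / ρ).toReal ≤ 1 / 2 := by
    have : 1 / ρ ≤ 1 / 2 := ENNReal.div_le_div_left hρ 1
    have := ENNReal.toReal_mono (by simp) this
    simpa using this
  have hsum : (1 / ρ).toReal + 1 / qs'.toReal = 1 := by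
    have := congrArg ENNReal.toReal hconj
    rw [ENNReal.toReal_add hρ1 hq1, ENNReal.toReal_div 1 qs'] at this
    simpa using this
  have hqt : qs' ≠ ∞ := by
    rintro rfl
    simp only [ENNReal.toReal_top, div_zero, add_zero] at hsum
    linarith
  have hqpos : 0 < qs'.toReal := ENNReal.toReal_pos hq0 hqt
  have hppos : 0 < p.toReal := ENNReal.toReal_pos (zero_lt_one.trans_le hp).ne' hpt
  have h := (ENNReal.toReal_lt_toReal hpt
    (ENNReal.mul_ne_top hqt (ENNReal.natCast_ne_top _))).2 hp2
  rw [ENNReal.toReal_mul, ENNReal.toReal_natCast] at h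
  refine ⟨_, rfl, by linarith, by linarith [ENNReal.toReal_nonneg (a := 1 / ρ)], ?_, hpt⟩
  have ha : 1 - (1 / ρ).toReal = 1 / qs'.toReal := by linarith
  rw [ha, mul_one_div, div_lt_div_iff₀ hqpos hppos]
  linarith

/-- The auxiliary exponent for the high-high interaction: `p` itself if `p ≥ 2`, the conjugate of `p`
if `p ≤ 2`. -/
lemma exists_holder_exponent (n : ℕ) (hn : 3 ≤ n) {p : ℝ≥0∞} (hp : 1 ≤ p) {a : ℝ}
    (ha : a ≤ 1) (ha3 : n = 3 → a < 1) (hap : a < ((n - 1 : ℕ) : ℝ) * (1 / p.toReal)) :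
    ∃ pt : ℝ≥0∞, p ≤ pt ∧ p⁻¹ + pt⁻¹ ≤ 1 ∧
      0 < ((n - 1 : ℕ) : ℝ) * (1 / p.toReal + 1 / pt.toReal) - 2 * a := by
  -- the margin is `2 (d / p - a)` for `2 ≤ p` and `d - 2 a` for `p ≤ 2`
  rcases le_total 2 p with h | h
  · refine ⟨p, le_rfl, ?_, by linarith⟩
    calc p⁻¹ + p⁻¹ ≤ 2⁻¹ + 2⁻¹ := by gcongr
      _ = 1 := ENNReal.inv_two_add_inv_two
  · have h1 : p⁻¹ ≤ 1 := ENNReal.inv_le_one.2 hp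
    have h2 : 1 - p⁻¹ ≤ p⁻¹ := by
      rw [tsub_le_iff_right, ← ENNReal.inv_two_add_inv_two]
      gcongr
    refine ⟨(1 - p⁻¹)⁻¹, ?_, ?_, ?_⟩
    · rw [ENNReal.le_inv_iff_le_inv]; exact h2
    · rw [inv_inv, add_tsub_cancel_of_le h1]
    · have e : 1 / p.toReal + 1 / ((1 - p⁻¹)⁻¹).toReal = 1 := by
        rw [ENNReal.toReal_inv (1 - p⁻¹), one_div, one_div, inv_inv, ENNReal.toReal_sub_of_le h1 (by simp),
          ENNReal.toReal_inv]
        simp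
      rw [e, mul_one]
      rcases hn.eq_or_lt with rfl | hn4
      · have := ha3 rfl
        norm_num
        linarith
      · have : (3:ℝ) ≤ ((n - 1 : ℕ) : ℝ) := by exact_mod_cast (by omega : 3 ≤ n - 1)
        linarith

/-- Bilinear estimate in scaling critical Chemin–Lerner spaces:
with `q* = max{2,q}` and `q*'` its Hölder conjugate, `1 ≤ p < q*'(n-1)`
(and `q < ∞` if `n = 3`),
`‖fg‖_{L̃^{q*/2}(Ḃ^{(n-1)/p+2/q*-2}_{p,r})}
  ≤ C ‖f‖_{L̃^{q*}(Ḃ^{(n-1)/p+1/q*-1}_{p,r})} ‖g‖_{L̃^{q*}(Ḃ^{(n-1)/p+1/q*-1}_{p,r})}`. -/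
theorem bilinear_estimate_chemin_lerner (n : ℕ) (hn : 3 ≤ n) (P : LPData (n-1))
    (p q r qs' : ℝ≥0∞) (hp : 1 ≤ p) (hq : 1 ≤ q) (hr : 1 ≤ r)
    (hconj : 1 / max 2 q + 1 / qs' = 1)
    (hp2 : p < qs' * ((n - 1 : ℕ) : ℝ≥0∞))
    (h3 : n = 3 → q ≠ ∞) :
    ∃ C > (0:ℝ), ∀ f g : ℝ → Rd (n-1) → ℂ, SliceSchwartz f → SliceSchwartz g →
      CL P (((n:ℝ) - 1) * (1/p).toReal + 2 * (1/(max 2 q)).toReal - 2) (max 2 q / 2) p r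
          (fun t x => f t x * g t x)
        ≤ ENNReal.ofReal C *
            CL P (((n:ℝ) - 1) * (1/p).toReal + (1/(max 2 q)).toReal - 1) (max 2 q) p r f *
            CL P (((n:ℝ) - 1) * (1/p).toReal + (1/(max 2 q)).toReal - 1) (max 2 q) p r g := by
  set ρ : ℝ≥0∞ := max 2 q with hρdef
  have hρ : 2 ≤ ρ := le_max_left _ _
  have hd : ((n - 1 : ℕ) : ℝ) = (n:ℝ) - 1 := by
    rw [Nat.cast_sub (by omega)]; simp
  have : Nontrivial (Rd (n - 1)) := by
    have : Nonempty (Fin (n - 1)) := ⟨⟨0, by omega⟩⟩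
    infer_instance
  obtain ⟨a, ha1, ha2, ha3, hap, hpt⟩ := exponent_facts n hp hρ hconj hp2
  have ha4 : n = 3 → a < 1 := by
    intro h
    have hρt : ρ ≠ ∞ := (max_lt ENNReal.ofNat_lt_top (h3 h).lt_top).ne
    have : 0 < (1 / ρ).toReal := ENNReal.toReal_pos (by simp [hρt]) (ne_top_of_le_ne_top
      ENNReal.one_ne_top (le_self_add.trans_eq hconj))
    linarith
  obtain ⟨pt, hpp, hm, hl⟩ := exists_holder_exponent n hn hp ha3 ha4 hap
  obtain ⟨C, hC, H⟩ := CL_bilinear P hp hpt hpp hm hρ hr (by linarith : 0 < a) hl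
  refine ⟨C.toReal + 1, by positivity, fun f g hf hg => ?_⟩
  have e1 : ((n:ℝ) - 1) * (1 / p).toReal + 2 * (1 / ρ).toReal - 2
      = ((n - 1 : ℕ) : ℝ) * (1 / p.toReal) - 2 * a := by
    rw [hd, ENNReal.toReal_div, ENNReal.toReal_one, ha1]; ring
  have e2 : ((n:ℝ) - 1) * (1 / p).toReal + (1 / ρ).toReal - 1
      = ((n - 1 : ℕ) : ℝ) * (1 / p.toReal) - a := by
    rw [hd, ENNReal.toReal_div, ENNReal.toReal_one, ha1]; ring
  rw [e1, e2]
  refine (H f g hf hg).trans ?_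
  gcongr
  rw [ENNReal.ofReal_add ENNReal.toReal_nonneg zero_le_one, ENNReal.ofReal_toReal hC]
  exact le_self_add
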